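/- arXiv:2409.20274 — 2 statements merged into one kernel-verified Lean document; each statement's English description precedes it below -/
import Mathlib

section
/- Let s be a positive integer and let k be a binomially distributed random variable with s trials and success probability p ∈ [0,1], and let p̂ = k/s. For all ε, δ ∈ (0,1], if s ≥ (ε + 1/2)/(ε²·δ), then the probability that p̂ lies within ε of p satisfies P(p − ε ≤ p̂ ≤ p + ε) ≥ 1 − δ. -/
/-- The probability that a binomial random variable with `s` trials and success
probability `p` takes the value `j` is `C(s,j) * p^j * (1-p)^(s-j)`. -/
noncomputable def binomPMF (s : ℕ) (p : ℝ) (j : ℕ) : ℝ :=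
  (s.choose j : ℝ) * p ^ j * (1 - p) ^ (s - j)

/-- **Absolute Error** (paper's Theorem, relaxed bound): if the number of samples
`s` satisfies `s ≥ (ε + 1/2)/(ε² δ)`, then the estimate `p̂ = k/s` of a binomially
distributed `k` lies within `ε` of `p` with probability at least `1 - δ`. -/
theorem absolute_error_bound (s : ℕ) (hs : 1 ≤ s) (p : ℝ) (hp0 : 0 ≤ p) (hp1 : p ≤ 1)
    (ε δ : ℝ) (hε0 : 0 < ε) (hε1 : ε ≤ 1) (hδ0 : 0 < δ) (hδ1 : δ ≤ 1)
    (hbound : (s : ℝ) ≥ (ε + 1 / 2) / (ε ^ 2 * δ)) :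
    (∑ j ∈ Finset.range (s + 1),
        if p - ε ≤ (j : ℝ) / (s : ℝ) ∧ (j : ℝ) / (s : ℝ) ≤ p + ε
        then binomPMF s p j else 0) ≥ 1 - δ := by
  have hsum : ∑ j ∈ Finset.range (s + 1), binomPMF s p j = 1 := by
    have h := congrArg (Polynomial.eval p) (bernsteinPolynomial.sum ℝ s)
    simpa [Polynomial.eval_finset_sum, bernsteinPolynomial, binomPMF] using h
  have hvar : ∑ j ∈ Finset.range (s + 1), ((s : ℝ) * p - j) ^ 2 * binomPMF s p j
      = s * p * (1 - p) := by
    have h := congrArg (Polynomial.eval p) (bernsteinPolynomial.variance ℝ s)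
    simpa [Polynomial.eval_finset_sum, bernsteinPolynomial, binomPMF] using h
  have hnn : ∀ j, 0 ≤ binomPMF s p j := by
    intro j
    have : 0 ≤ 1 - p := by linarith
    unfold binomPMF
    positivity
  have hs0 : (0 : ℝ) < s := by exact_mod_cast hs
  have hb : ε + 1 / 2 ≤ s * (ε ^ 2 * δ) := by
    rwa [ge_iff_le, div_le_iff₀ (by positivity)] at hbound
  have hD : (0 : ℝ) < (s * ε) ^ 2 := by positivity
  have key : ∀ j ∈ Finset.range (s + 1),
      binomPMF s p j - ((s : ℝ) * p - j) ^ 2 * binomPMF s p j / (s * ε) ^ 2 ≤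
      if p - ε ≤ (j : ℝ) / (s : ℝ) ∧ (j : ℝ) / (s : ℝ) ≤ p + ε
        then binomPMF s p j else 0 := by
    intro j _
    have hj := hnn j
    split_ifs with h
    · have : 0 ≤ ((s : ℝ) * p - j) ^ 2 * binomPMF s p j / (s * ε) ^ 2 := by positivity
      linarith
    · rw [sub_nonpos, le_div_iff₀ hD, mul_comm]
      refine mul_le_mul_of_nonneg_right ?_ hj
      have h1 : (0 : ℝ) < s * ε := by positivity
      rw [le_div_iff₀ hs0, div_le_iff₀ hs0, not_and_or, not_le, not_le] at h
      rcases h with h | h <;> nlinarith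
  have h2 := Finset.sum_le_sum key
  rw [Finset.sum_sub_distrib, ← Finset.sum_div, hsum, hvar] at h2
  have h3 : (s : ℝ) * p * (1 - p) / (s * ε) ^ 2 ≤ δ := by
    rw [div_le_iff₀ hD]
    have h4 : p * (1 - p) ≤ s * (ε ^ 2 * δ) := by nlinarith [sq_nonneg (p - 1 / 2)]
    calc (s : ℝ) * p * (1 - p) = s * (p * (1 - p)) := by ring
      _ ≤ s * (s * (ε ^ 2 * δ)) := mul_le_mul_of_nonneg_left h4 hs0.le
      _ = δ * (s * ε) ^ 2 := by ring
  linarith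
end

section
/- Let s be a positive integer and let k be a binomially distributed random variable with s trials and success probability p ∈ [0,1], and let p̂ = k/s. For all ε, δ ∈ (0,1], if s ≥ (2p(1−p) + ε)/(ε²·δ), then P(p − ε ≤ p̂ ≤ p + ε) ≥ 1 − δ. -/
/-- **Absolute Error** (sharper bound from the paper's proof): if the number of
samples `s` satisfies `s ≥ (2p(1-p) + ε)/(ε² δ)`, then the estimate `p̂ = k/s` of
a binomially distributed `k` lies within `ε` of `p` with probability at least `1 - δ`. -/
theorem absolute_error_sharp_bound (s : ℕ) (hs : 1 ≤ s) (p : ℝ) (hp0 : 0 ≤ p) (hp1 : p ≤ 1)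
    (ε δ : ℝ) (hε0 : 0 < ε) (hε1 : ε ≤ 1) (hδ0 : 0 < δ) (hδ1 : δ ≤ 1)
    (hbound : (s : ℝ) ≥ (2 * p * (1 - p) + ε) / (ε ^ 2 * δ)) :
    (∑ j ∈ Finset.range (s + 1),
        if p - ε ≤ (j : ℝ) / (s : ℝ) ∧ (j : ℝ) / (s : ℝ) ≤ p + ε
        then binomPMF s p j else 0) ≥ 1 - δ := by
  have hs0 : (0 : ℝ) < s := by exact_mod_cast hs
  have hnn : ∀ j, 0 ≤ binomPMF s p j := by
    intro j
    have h1 : 0 ≤ 1 - p := by linarith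
    unfold binomPMF
    positivity
  have hsum : ∑ j ∈ Finset.range (s + 1), binomPMF s p j = 1 := by
    have h := add_pow p (1 - p) s
    rw [show p + (1 - p) = 1 by ring, one_pow] at h
    rw [h]
    refine Finset.sum_congr rfl fun j _ => ?_
    unfold binomPMF
    ring
  have hvar : ∑ j ∈ Finset.range (s + 1), ((s : ℝ) * p - j) ^ 2 * binomPMF s p j
      = s * p * (1 - p) := by
    have h := congrArg (Polynomial.eval p) (bernsteinPolynomial.variance ℝ s)
    simp only [nsmul_eq_mul, bernsteinPolynomial, Polynomial.eval_finset_sum,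
      Polynomial.eval_mul, Polynomial.eval_pow, Polynomial.eval_sub,
      Polynomial.eval_natCast, Polynomial.eval_X, Polynomial.eval_one] at h
    exact h
  have hE : (0 : ℝ) < (s * ε) ^ 2 := by positivity
  have hpt : ∀ j ∈ Finset.range (s + 1),
      binomPMF s p j - (((s : ℝ) * p - j) ^ 2 * binomPMF s p j) / (s * ε) ^ 2 ≤
      if p - ε ≤ (j : ℝ) / (s : ℝ) ∧ (j : ℝ) / (s : ℝ) ≤ p + ε
        then binomPMF s p j else 0 := by
    intro j _
    split_ifs with hc
    · have : 0 ≤ (((s : ℝ) * p - j) ^ 2 * binomPMF s p j) / (s * ε) ^ 2 :=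
        div_nonneg (mul_nonneg (sq_nonneg _) (hnn j)) hE.le
      linarith
    · rw [sub_nonpos, le_div_iff₀ hE, mul_comm]
      refine mul_le_mul_of_nonneg_right ?_ (hnn j)
      rw [le_div_iff₀ hs0, div_le_iff₀ hs0] at hc
      rw [sq_le_sq, abs_of_pos (mul_pos hs0 hε0)]
      by_contra hlt
      rw [not_le, abs_lt] at hlt
      exact hc ⟨by nlinarith, by nlinarith⟩
  have hfin := Finset.sum_le_sum hpt
  rw [Finset.sum_sub_distrib, ← Finset.sum_div, hsum, hvar] at hfin
  have hb : (s : ℝ) * p * (1 - p) / (s * ε) ^ 2 ≤ δ := by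
    rw [ge_iff_le, div_le_iff₀ (by positivity)] at hbound
    rw [div_le_iff₀ hE]
    have hpp : 0 ≤ p * (1 - p) := mul_nonneg hp0 (by linarith)
    have : p * (1 - p) ≤ s * (ε ^ 2 * δ) := by linarith
    nlinarith [mul_le_mul_of_nonneg_left this hs0.le]
  linarith
end
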